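/- arXiv:2007.11287 — 3 statements merged into one kernel-verified Lean document; each statement's English description precedes it below -/
import Mathlib

section
/- Let p(σ,y) = (1 + tanh((β/2)(h̃_y(σ) + q_y σ_y)))/2 denote the conditional SCA probability that site y takes spin +1 after an update from configuration σ. Then for every σ ∈ Ω and every x ∈ V, Σ_{y∈V} |p(σ,y) − p(σ^x,y)| ≤ tanh(βq_x/2) + Σ_{y∈V} tanh(β|J_{x,y}|/2), where σ^x denotes σ with the spin at x flipped. -/
open Real Finset

/-- Spin configurations: `Ω = {-1,+1}^V`. -/
abbrev Conf (V : Type*) := V → ({-1, 1} : Finset ℝ)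

instance {V : Type*} : Nonempty (Conf V) := ⟨fun _ => ⟨1, by simp⟩⟩

/-- Flip a single spin value. -/
noncomputable def spinFlip (s : ({-1, 1} : Finset ℝ)) : ({-1, 1} : Finset ℝ) :=
  ⟨-(s : ℝ), by
    have hs := s.2
    simp only [Finset.mem_insert, Finset.mem_singleton] at hs ⊢
    rcases hs with h | h <;> simp [h]⟩

/-- `σ^x`: the configuration `σ` with the spin at `x` flipped. -/
noncomputable def confFlip {V : Type*} [DecidableEq V] (σ : Conf V) (x : V) : Conf V :=
  Function.update σ x (spinFlip (σ x))

/-- `D_{σ,τ}`: the set of vertices at which `σ` and `τ` disagree. -/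
noncomputable def Dset {V : Type*} [Fintype V] (σ τ : Conf V) : Finset V :=
  Finset.univ.filter fun x => (σ x : ℝ) ≠ (τ x : ℝ)

/-- The cavity field `h̃_x(σ) = Σ_y J_{x,y} σ_y + h_x`. -/
noncomputable def cavity {V : Type*} [Fintype V] (J : V → V → ℝ) (h : V → ℝ)
    (σ : Conf V) (x : V) : ℝ :=
  (∑ y, J x y * (σ y : ℝ)) + h x

/-- The extended Hamiltonian `H̃(σ,τ)`. -/
noncomputable def Htilde {V : Type*} [Fintype V] (J : V → V → ℝ) (h q : V → ℝ)
    (σ τ : Conf V) : ℝ :=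
  -(1/2) * ∑ x, ∑ y, J x y * (σ x : ℝ) * (τ y : ℝ)
    - (1/2) * ∑ x, h x * ((σ x : ℝ) + (τ x : ℝ))
    - (1/2) * ∑ x, q x * (σ x : ℝ) * (τ x : ℝ)

/-- The Ising Hamiltonian `H(σ)`. -/
noncomputable def Hamil {V : Type*} [Fintype V] (J : V → V → ℝ) (h : V → ℝ)
    (σ : Conf V) : ℝ :=
  -(1/2) * ∑ x, ∑ y, J x y * (σ x : ℝ) * (σ y : ℝ) - ∑ x, h x * (σ x : ℝ)

/-- The SCA weight `w(σ) = Σ_τ e^{-β H̃(σ,τ)}`. -/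
noncomputable def wSCA {V : Type*} [Fintype V] [DecidableEq V] (J : V → V → ℝ)
    (h q : V → ℝ) (β : ℝ) (σ : Conf V) : ℝ :=
  ∑ τ : Conf V, Real.exp (-β * Htilde J h q σ τ)

/-- The SCA transition probability `P^SCA_{β,q}(σ,τ)`. -/
noncomputable def PSCA {V : Type*} [Fintype V] [DecidableEq V] (J : V → V → ℝ)
    (h q : V → ℝ) (β : ℝ) (σ τ : Conf V) : ℝ :=
  Real.exp (-β * Htilde J h q σ τ) / wSCA J h q β σ

/-- The SCA equilibrium distribution `π^SCA_{β,q}`. -/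
noncomputable def piSCA {V : Type*} [Fintype V] [DecidableEq V] (J : V → V → ℝ)
    (h q : V → ℝ) (β : ℝ) (σ : Conf V) : ℝ :=
  wSCA J h q β σ / ∑ τ : Conf V, wSCA J h q β τ

/-- Total-variation distance between two measures on `Ω`. -/
noncomputable def tvDist {V : Type*} [Fintype V] [DecidableEq V]
    (μ ν : Conf V → ℝ) : ℝ :=
  (1/2) * ∑ σ : Conf V, |μ σ - ν σ|

/-- The conditional SCA probability `p(σ,y)` that site `y` takes spin `+1`
after an update from configuration `σ`. -/
noncomputable def condProb {V : Type*} [Fintype V] (J : V → V → ℝ) (h q : V → ℝ)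
    (β : ℝ) (σ : Conf V) (y : V) : ℝ :=
  (1 + Real.tanh (β / 2 * (cavity J h σ y + q y * (σ y : ℝ)))) / 2

theorem abs_tanh_add_sub_tanh_sub_le {t : ℝ} (ht : 0 ≤ t) (a : ℝ) :
    |Real.tanh (a + t) - Real.tanh (a - t)| ≤ 2 * Real.tanh t := by
  have hs : 0 ≤ Real.sinh t := Real.sinh_nonneg_iff.2 ht
  have hc : 0 < Real.cosh t := Real.cosh_pos t
  have hp : 0 < Real.cosh (a + t) := Real.cosh_pos _
  have hm : 0 < Real.cosh (a - t) := Real.cosh_pos _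
  have ha : Real.cosh a ^ 2 = Real.sinh a ^ 2 + 1 := Real.cosh_sq a
  have hct : Real.cosh t ^ 2 = Real.sinh t ^ 2 + 1 := Real.cosh_sq t
  have hprod : Real.cosh (a + t) * Real.cosh (a - t) = Real.cosh t ^ 2 + Real.sinh a ^ 2 := by
    rw [Real.cosh_add, Real.cosh_sub]
    linear_combination Real.cosh t ^ 2 * ha + Real.sinh a ^ 2 * hct
  have hdiff : Real.tanh (a + t) - Real.tanh (a - t) =
      2 * (Real.sinh t * Real.cosh t) / (Real.cosh (a + t) * Real.cosh (a - t)) := by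
    rw [Real.tanh_eq_sinh_div_cosh, Real.tanh_eq_sinh_div_cosh, div_sub_div _ _ hp.ne' hm.ne']
    congr 1
    rw [Real.cosh_add, Real.cosh_sub, Real.sinh_add, Real.sinh_sub]
    linear_combination 2 * Real.sinh t * Real.cosh t * ha
  have htanh : 2 * Real.tanh t = 2 * (Real.sinh t * Real.cosh t) / Real.cosh t ^ 2 := by
    rw [Real.tanh_eq_sinh_div_cosh]
    field_simp
  rw [hdiff, abs_of_nonneg (by positivity), htanh, hprod]
  gcongr
  exact le_add_of_nonneg_right (sq_nonneg _)

theorem abs_tanh_sub_tanh_le (u v : ℝ) :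
    |Real.tanh u - Real.tanh v| ≤ 2 * Real.tanh (|u - v| / 2) := by
  wlog huv : v ≤ u generalizing u v
  · rw [abs_sub_comm, abs_sub_comm u]
    exact this v u (le_of_not_ge huv)
  rw [abs_of_nonneg (sub_nonneg.2 huv)]
  have := abs_tanh_add_sub_tanh_sub_le (t := (u - v) / 2) (by linarith) ((u + v) / 2)
  rwa [show (u + v) / 2 + (u - v) / 2 = u by ring,
    show (u + v) / 2 - (u - v) / 2 = v by ring] at this

theorem Conf.abs_spin {V : Type*} (σ : Conf V) (x : V) : |(σ x : ℝ)| = 1 := by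
  have hs := (σ x).2
  simp only [Finset.mem_insert, Finset.mem_singleton] at hs
  rcases hs with h | h <;> simp [h]

theorem spin_sub_confFlip {V : Type*} [DecidableEq V] (σ : Conf V) (x y : V) :
    (σ y : ℝ) - (confFlip σ x y : ℝ) = if y = x then 2 * (σ x : ℝ) else 0 := by
  by_cases hy : y = x
  · subst hy
    simp only [confFlip, spinFlip, Function.update_self, if_true]
    ring
  · simp [confFlip, hy]

theorem cavity_sub_confFlip {V : Type*} [Fintype V] [DecidableEq V] (J : V → V → ℝ)
    (h : V → ℝ) (σ : Conf V) (x y : V) :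
    cavity J h σ y - cavity J h (confFlip σ x) y = 2 * J y x * (σ x : ℝ) := by
  simp only [cavity, add_sub_add_right_eq_sub, ← Finset.sum_sub_distrib, ← mul_sub,
    spin_sub_confFlip, mul_ite, mul_zero, Finset.sum_ite_eq',
    Finset.mem_univ, if_true]
  ring

theorem abs_condProb_sub_confFlip_le {V : Type*} [Fintype V] [DecidableEq V]
    (J : V → V → ℝ) (h q : V → ℝ) {β : ℝ} (hβ : 0 ≤ β) (σ : Conf V) (x y : V) :
    |condProb J h q β σ y - condProb J h q β (confFlip σ x) y| ≤
      Real.tanh (β * |J y x + if y = x then q y else 0| / 2) := by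
  have hfield : β / 2 * (cavity J h σ y + q y * (σ y : ℝ)) -
      β / 2 * (cavity J h (confFlip σ x) y + q y * (confFlip σ x y : ℝ)) =
      β * (J y x + if y = x then q y else 0) * (σ x : ℝ) := by
    have hspin := spin_sub_confFlip σ x y
    have hcav := cavity_sub_confFlip J h σ x y
    split_ifs at hspin ⊢ <;> linear_combination β / 2 * hcav + β / 2 * q y * hspin
  have htanh := abs_tanh_sub_tanh_le (β / 2 * (cavity J h σ y + q y * (σ y : ℝ)))
    (β / 2 * (cavity J h (confFlip σ x) y + q y * (confFlip σ x y : ℝ)))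
  rw [hfield, abs_mul, abs_mul, Conf.abs_spin, mul_one, abs_of_nonneg hβ] at htanh
  rw [condProb, condProb, ← sub_div, add_sub_add_left_eq_sub, abs_div, abs_two,
    div_le_iff₀ two_pos, mul_comm _ (2 : ℝ)]
  exact htanh

/-- one-site flip estimate on the conditional update probabilities. -/
theorem sum_abs_condProb_flip_le {V : Type*} [Fintype V] [DecidableEq V]
    (J : V → V → ℝ) (hJsym : ∀ x y, J x y = J y x) (hJdiag : ∀ x, J x x = 0)
    (h q : V → ℝ) (hq : ∀ x, 0 ≤ q x) (β : ℝ) (hβ : 0 ≤ β)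
    (σ : Conf V) (x : V) :
    ∑ y, |condProb J h q β σ y - condProb J h q β (confFlip σ x) y|
      ≤ Real.tanh (β * q x / 2) + ∑ y, Real.tanh (β * |J x y| / 2) := by
  calc ∑ y, |condProb J h q β σ y - condProb J h q β (confFlip σ x) y|
      ≤ ∑ y, ((if y = x then Real.tanh (β * q x / 2) else 0) +
          Real.tanh (β * |J x y| / 2)) := by
        refine Finset.sum_le_sum fun y _ => ?_
        refine (abs_condProb_sub_confFlip_le J h q hβ σ x y).trans_eq ?_
        by_cases hy : y = x
        · subst hy
          simp [hJdiag, abs_of_nonneg (hq y)]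
        · simp [hy, hJsym y x]
    _ = Real.tanh (β * q x / 2) + ∑ y, Real.tanh (β * |J x y| / 2) := by
        simp [Finset.sum_add_distrib]
end

section
/- (Exact factorization of the SCA transition probability) Define ε_x(σ) = e^{−βq_x/2} cosh((β/2)h̃_x(σ)) / cosh((β/2)(h̃_x(σ) + q_x σ_x)) and p_x(σ) = e^{−(β/2) h̃_x(σ) σ_x} / (2 cosh((β/2) h̃_x(σ))). Then for all σ, τ ∈ Ω, P^SCA_{β,q}(σ,τ) = Π_{x∈D_{σ,τ}} (ε_x(σ) p_x(σ)) · Π_{y∈V∖D_{σ,τ}} (1 − ε_y(σ) p_y(σ)), where D_{σ,τ} = {x ∈ V : σ_x ≠ τ_x}. -/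
open Real Finset

/-- `ε_x(σ)` from Remark 2.2(ii). -/
noncomputable def epsFactor {V : Type*} [Fintype V] (J : V → V → ℝ) (h q : V → ℝ)
    (β : ℝ) (σ : Conf V) (x : V) : ℝ :=
  Real.exp (-(β / 2) * q x) * Real.cosh (β / 2 * cavity J h σ x)
    / Real.cosh (β / 2 * (cavity J h σ x + q x * (σ x : ℝ)))

/-- `p_x(σ)` from Remark 2.2(ii). -/
noncomputable def pFactor {V : Type*} [Fintype V] (J : V → V → ℝ) (h : V → ℝ)
    (β : ℝ) (σ : Conf V) (x : V) : ℝ :=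
  Real.exp (-(β / 2) * cavity J h σ x * (σ x : ℝ))
    / (2 * Real.cosh (β / 2 * cavity J h σ x))

/-- `(β/2) (h̃_x(σ) + q_x σ_x)`: the effective field acting on the updated spin at `x`. -/
noncomputable def effField {V : Type*} [Fintype V] (J : V → V → ℝ) (h q : V → ℝ)
    (β : ℝ) (σ : Conf V) (x : V) : ℝ :=
  β / 2 * (cavity J h σ x + q x * (σ x : ℝ))

theorem spin_eq_neg_one_or_one (s : ({-1, 1} : Finset ℝ)) : (s : ℝ) = -1 ∨ (s : ℝ) = 1 := by
  have hs := s.2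
  simpa only [Finset.mem_insert, Finset.mem_singleton] using hs

theorem neg_mul_Htilde_eq {V : Type*} [Fintype V] (J : V → V → ℝ)
    (hJsym : ∀ x y, J x y = J y x) (h q : V → ℝ) (β : ℝ) (σ τ : Conf V) :
    -β * Htilde J h q σ τ
      = β / 2 * ∑ x, h x * (σ x : ℝ) + ∑ x, effField J h q β σ x * (τ x : ℝ) := by
  have hswap : ∑ x, ∑ y, J x y * (σ x : ℝ) * (τ y : ℝ)
      = ∑ x, (∑ y, J x y * (σ y : ℝ)) * (τ x : ℝ) := by
    rw [Finset.sum_comm]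
    simp only [Finset.sum_mul]
    refine Finset.sum_congr rfl fun y _ => Finset.sum_congr rfl fun x _ => ?_
    rw [hJsym]
  have hfield : ∑ x, effField J h q β σ x * (τ x : ℝ)
      = β / 2 * (∑ x, (∑ y, J x y * (σ y : ℝ)) * (τ x : ℝ) + ∑ x, h x * (τ x : ℝ)
        + ∑ x, q x * (σ x : ℝ) * (τ x : ℝ)) := by
    rw [← Finset.sum_add_distrib, ← Finset.sum_add_distrib, Finset.mul_sum]
    refine Finset.sum_congr rfl fun x _ => ?_
    rw [effField, cavity]
    ring
  rw [Htilde, hswap, hfield]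
  simp only [mul_add, Finset.sum_add_distrib]
  ring

theorem sum_spin_exp_mul (a : ℝ) :
    ∑ s : ({-1, 1} : Finset ℝ), Real.exp (a * (s : ℝ)) = 2 * Real.cosh a := by
  rw [Finset.sum_coe_sort ({-1, 1} : Finset ℝ) fun s => Real.exp (a * s),
    Finset.sum_pair (by norm_num), Real.cosh_eq]
  simp only [mul_neg, mul_one]
  ring

theorem wSCA_eq_prod {V : Type*} [Fintype V] [DecidableEq V] (J : V → V → ℝ)
    (hJsym : ∀ x y, J x y = J y x) (h q : V → ℝ) (β : ℝ) (σ : Conf V) :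
    wSCA J h q β σ
      = Real.exp (β / 2 * ∑ x, h x * (σ x : ℝ))
        * ∏ x, (2 * Real.cosh (effField J h q β σ x)) := by
  simp only [wSCA, neg_mul_Htilde_eq J hJsym, Real.exp_add, Real.exp_sum, ← Finset.mul_sum,
    ← sum_spin_exp_mul]
  rw [Fintype.prod_sum]

theorem PSCA_eq_prod {V : Type*} [Fintype V] [DecidableEq V] (J : V → V → ℝ)
    (hJsym : ∀ x y, J x y = J y x) (h q : V → ℝ) (β : ℝ) (σ τ : Conf V) :
    PSCA J h q β σ τ
      = ∏ x, Real.exp (effField J h q β σ x * (τ x : ℝ))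
        / (2 * Real.cosh (effField J h q β σ x)) := by
  rw [PSCA, wSCA_eq_prod J hJsym, neg_mul_Htilde_eq J hJsym, Real.exp_add, Real.exp_sum,
    mul_div_mul_left _ _ (Real.exp_ne_zero _), Finset.prod_div_distrib]

theorem epsFactor_mul_pFactor {V : Type*} [Fintype V] (J : V → V → ℝ) (h q : V → ℝ)
    (β : ℝ) (σ : Conf V) (x : V) :
    epsFactor J h q β σ x * pFactor J h β σ x
      = Real.exp (effField J h q β σ x * -(σ x : ℝ))
        / (2 * Real.cosh (effField J h q β σ x)) := by
  have hsq : (σ x : ℝ) * (σ x : ℝ) = 1 := by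
    rcases spin_eq_neg_one_or_one (σ x) with hs | hs <;> simp [hs]
  have hexp : effField J h q β σ x * -(σ x : ℝ)
      = -(β / 2) * q x + -(β / 2) * cavity J h σ x * (σ x : ℝ) := by
    rw [effField]
    linear_combination -(β / 2) * q x * hsq
  have hcosh := (Real.cosh_pos (β / 2 * cavity J h σ x)).ne'
  have hcosh_eff := (Real.cosh_pos (effField J h q β σ x)).ne'
  rw [hexp, Real.exp_add, epsFactor, pFactor, ← effField]
  field_simp

theorem one_sub_exp_neg_div_cosh (a : ℝ) (s : ({-1, 1} : Finset ℝ)) :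
    1 - Real.exp (a * -(s : ℝ)) / (2 * Real.cosh a)
      = Real.exp (a * (s : ℝ)) / (2 * Real.cosh a) := by
  have hcosh : 2 * Real.cosh a ≠ 0 := (mul_pos two_pos (Real.cosh_pos a)).ne'
  rw [eq_div_iff hcosh, sub_mul, div_mul_cancel₀ _ hcosh, Real.cosh_eq]
  rcases spin_eq_neg_one_or_one s with hs | hs <;>
    simp only [hs, neg_neg, mul_neg, mul_one] <;> ring

/-- exact factorization of the SCA transition probability. -/
theorem sca_transition_flip_factorization {V : Type*} [Fintype V] [DecidableEq V]
    (J : V → V → ℝ) (hJsym : ∀ x y, J x y = J y x) (hJdiag : ∀ x, J x x = 0)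
    (h q : V → ℝ) (hq : ∀ x, 0 ≤ q x) (β : ℝ) (hβ : 0 ≤ β) (σ τ : Conf V) :
    PSCA J h q β σ τ
      = (∏ x ∈ Dset σ τ, epsFactor J h q β σ x * pFactor J h β σ x)
        * ∏ y ∈ Finset.univ \ Dset σ τ,
            (1 - epsFactor J h q β σ y * pFactor J h β σ y) := by
  have hmem : ∀ x, x ∈ Dset σ τ ↔ (σ x : ℝ) ≠ (τ x : ℝ) := fun x => by simp [Dset]
  rw [PSCA_eq_prod J hJsym, ← Finset.prod_sdiff (Finset.subset_univ (Dset σ τ)), mul_comm]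
  congr 1
  · refine Finset.prod_congr rfl fun x hx => ?_
    have hflip : (τ x : ℝ) = -(σ x : ℝ) := by
      have hne := (hmem x).1 hx
      rcases spin_eq_neg_one_or_one (σ x) with hs | hs <;>
        rcases spin_eq_neg_one_or_one (τ x) with ht | ht <;> simp_all
    rw [epsFactor_mul_pFactor, hflip]
  · refine Finset.prod_congr rfl fun x hx => ?_
    have heq : (σ x : ℝ) = (τ x : ℝ) := by
      simpa [hmem] using hx
    rw [epsFactor_mul_pFactor, one_sub_exp_neg_div_cosh, heq]
end

section
/- (Divergence of ergodic coefficients under logarithmic cooling) Let Γ = Σ_{x∈V} ( q_x + |h_x| + Σ_{y∈V} |J_{x,y}| ) and let β_t = (log t)/Γ for t ≥ 1. Then Σ_{t=1}^∞ (1 − δ(P^SCA_{β_t,q})) = ∞, where δ(P) = max_{σ,τ∈Ω} ||P(σ,·) − P(τ,·)||_TV is Dobrushin's ergodic coefficient. -/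
open Real Finset

/-- Dobrushin's ergodic coefficient `δ(P) = max_{σ,τ} ‖P(σ,·) − P(τ,·)‖_TV`. -/
noncomputable def dobrushin {V : Type*} [Fintype V] [DecidableEq V]
    (P : Conf V → Conf V → ℝ) : ℝ :=
  Finset.univ.sup' Finset.univ_nonempty
    (fun p : Conf V × Conf V => tvDist (P p.1) (P p.2))

lemma abs_spin (s : ({-1, 1} : Finset ℝ)) : |(s : ℝ)| = 1 := by
  have hs := s.2
  simp only [Finset.mem_insert, Finset.mem_singleton] at hs
  rcases hs with h | h <;> simp [h]

lemma abs_spin_sub_le (s r : ({-1, 1} : Finset ℝ)) : |(s : ℝ) - r| ≤ 2 := by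
  have := abs_sub (s : ℝ) r
  rw [abs_spin, abs_spin] at this
  linarith

/-- The oscillation of `H̃(σ, ·)` is at most `Γ`. -/
lemma Htilde_sub_le {V : Type*} [Fintype V] (J : V → V → ℝ) (h q : V → ℝ)
    (hq : ∀ x, 0 ≤ q x) (σ τ η : Conf V) :
    Htilde J h q σ τ - Htilde J h q σ η ≤ ∑ x, (q x + |h x| + ∑ y, |J x y|) := by
  have key : Htilde J h q σ τ - Htilde J h q σ η =
      ∑ x, ((1/2) * (q x * (σ x : ℝ) * ((η x : ℝ) - τ x)) + (1/2) * (h x * ((η x : ℝ) - τ x))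
        + ∑ y, (1/2) * (J x y * (σ x : ℝ) * ((η y : ℝ) - τ y))) := by
    simp only [Htilde, Finset.sum_add_distrib, ← Finset.mul_sum, mul_sub, mul_add,
      Finset.sum_sub_distrib]
    ring
  have bound (a : ℝ) (s r : ({-1, 1} : Finset ℝ)) : (1/2) * (a * ((s : ℝ) - r)) ≤ |a| := by
    have h1 := le_abs_self (a * ((s : ℝ) - r))
    rw [abs_mul] at h1
    have h2 := mul_le_mul_of_nonneg_left (abs_spin_sub_le s r) (abs_nonneg a)
    linarith
  rw [key]
  refine Finset.sum_le_sum fun x _ => add_le_add (add_le_add ?_ (bound _ _ _))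
    (Finset.sum_le_sum fun y _ => ?_)
  · simpa [abs_mul, abs_spin, abs_of_nonneg (hq x)] using bound (q x * (σ x : ℝ)) (η x) (τ x)
  · simpa [abs_mul, abs_spin] using bound (J x y * (σ x : ℝ)) (η y) (τ y)

lemma wSCA_pos {V : Type*} [Fintype V] [DecidableEq V] (J : V → V → ℝ) (h q : V → ℝ) (β : ℝ)
    (σ : Conf V) : 0 < wSCA J h q β σ :=
  Finset.sum_pos (fun _ _ => Real.exp_pos _) Finset.univ_nonempty

lemma sum_PSCA {V : Type*} [Fintype V] [DecidableEq V] (J : V → V → ℝ) (h q : V → ℝ) (β : ℝ)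
    (σ : Conf V) : ∑ τ, PSCA J h q β σ τ = 1 := by
  simp only [PSCA, ← Finset.sum_div]
  exact div_self (ne_of_gt (wSCA_pos J h q β σ))

/-- Uniform lower bound on the transition probabilities. -/
lemma exp_div_card_le_PSCA {V : Type*} [Fintype V] [DecidableEq V] (J : V → V → ℝ)
    (h q : V → ℝ) (hq : ∀ x, 0 ≤ q x) {β : ℝ} (hβ : 0 ≤ β) (σ τ : Conf V) :
    Real.exp (-(β * ∑ x, (q x + |h x| + ∑ y, |J x y|))) / Fintype.card (Conf V)
      ≤ PSCA J h q β σ τ := by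
  have hcard : (0 : ℝ) < Fintype.card (Conf V) := by exact_mod_cast Fintype.card_pos
  rw [PSCA, div_le_div_iff₀ hcard (wSCA_pos J h q β σ), wSCA, Finset.mul_sum,
    mul_comm _ (Fintype.card (Conf V) : ℝ),
    ← nsmul_eq_mul, Fintype.card, ← Finset.sum_const]
  refine Finset.sum_le_sum fun η _ => ?_
  rw [← Real.exp_add, Real.exp_le_exp]
  linarith [mul_le_mul_of_nonneg_left (Htilde_sub_le J h q hq σ τ η) hβ]

/-- Doeblin minorization: if all entries of a stochastic matrix are at least `ε / |Ω|`, then its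
ergodic coefficient is at most `1 - ε`. -/
lemma le_one_sub_dobrushin {V : Type*} [Fintype V] [DecidableEq V] {P : Conf V → Conf V → ℝ}
    {ε : ℝ} (hsum : ∀ σ, ∑ τ, P σ τ = 1)
    (hP : ∀ σ τ, ε / Fintype.card (Conf V) ≤ P σ τ) : ε ≤ 1 - dobrushin P := by
  have hcard : (0 : ℝ) < Fintype.card (Conf V) := by exact_mod_cast Fintype.card_pos
  suffices dobrushin P ≤ 1 - ε by linarith
  refine Finset.sup'_le _ _ fun p _ => ?_
  have hle : ∑ τ, |P p.1 τ - P p.2 τ| ≤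
      ∑ τ, (P p.1 τ + P p.2 τ - 2 * (ε / Fintype.card (Conf V))) :=
    Finset.sum_le_sum fun τ _ => by
      have h1 := hP p.1 τ
      have h2 := hP p.2 τ
      rw [abs_le]
      constructor <;> linarith
  rw [Finset.sum_sub_distrib, Finset.sum_add_distrib, hsum, hsum, Finset.sum_const,
    Finset.card_univ, nsmul_eq_mul] at hle
  have : (Fintype.card (Conf V) : ℝ) * (2 * (ε / Fintype.card (Conf V))) = 2 * ε := by
    field_simp
  rw [tvDist]
  linarith

/-- divergence of ergodic coefficients under logarithmic
cooling: with `Γ = Σ_x (q_x + |h_x| + Σ_y |J_{x,y}|)` and `β_t = (log t)/Γ`,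
the series `Σ_{t≥1} (1 − δ(P^SCA_{β_t,q}))` diverges. -/
theorem sum_one_sub_dobrushin_diverges {V : Type*} [Fintype V] [DecidableEq V]
    (J : V → V → ℝ) (hJsym : ∀ x y, J x y = J y x) (hJdiag : ∀ x, J x x = 0)
    (h q : V → ℝ) (hq : ∀ x, 0 ≤ q x) (Γ : ℝ)
    (hΓ : Γ = ∑ x, (q x + |h x| + ∑ y, |J x y|))
    (βseq : ℕ → ℝ) (hβ : ∀ t : ℕ, 1 ≤ t → βseq t = Real.log t / Γ) :
    Filter.Tendsto
      (fun N : ℕ => ∑ t ∈ Finset.Icc 1 N, (1 - dobrushin (PSCA J h q (βseq t))))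
      Filter.atTop Filter.atTop := by
  have hΓ0 : 0 ≤ Γ := by
    rw [hΓ]
    exact Finset.sum_nonneg fun x _ => add_nonneg (add_nonneg (hq x) (abs_nonneg _))
      (Finset.sum_nonneg fun y _ => abs_nonneg _)
  have hterm (t : ℕ) (ht : 1 ≤ t) :
      1 / (t : ℝ) ≤ 1 - dobrushin (PSCA J h q (βseq t)) := by
    have ht' : (1 : ℝ) ≤ t := by exact_mod_cast ht
    have hlog := Real.log_nonneg ht'
    have hβ0 : 0 ≤ βseq t := hβ t ht ▸ div_nonneg hlog hΓ0
    have hβΓ : βseq t * Γ ≤ Real.log t := by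
      rw [hβ t ht]
      rcases hΓ0.eq_or_lt with h0 | h0
      · simpa [← h0] using hlog
      · rw [div_mul_cancel₀ _ h0.ne']
    have hexp : 1 / (t : ℝ) ≤ Real.exp (-(βseq t * Γ)) := by
      rw [one_div, ← Real.exp_log (inv_pos.2 (zero_lt_one.trans_le ht')), Real.log_inv]
      exact Real.exp_le_exp.2 (neg_le_neg hβΓ)
    refine hexp.trans (le_one_sub_dobrushin (sum_PSCA J h q _) fun σ τ => ?_)
    rw [hΓ]
    exact exp_div_card_le_PSCA J h q hq hβ0 σ τ
  have hharm : Filter.Tendsto (fun N : ℕ => ∑ t ∈ Finset.Icc 1 N, 1 / (t : ℝ))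
      Filter.atTop Filter.atTop := by
    refine Real.tendsto_sum_range_one_div_nat_succ_atTop.congr fun N => ?_
    rw [← Finset.Ico_add_one_right_eq_Icc, Finset.sum_Ico_eq_sum_range]
    simp [add_comm]
  exact Filter.tendsto_atTop_mono
    (fun N => Finset.sum_le_sum fun t ht => hterm t (Finset.mem_Icc.1 ht).1) hharm
end
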